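/- For every integer k with 1 ≤ k ≤ n and all vertices u, v, w: if u ∈ Y_k(v) and w lies on a shortest path in G between u and v (i.e. dist(u,w) + dist(w,v) = dist(u,v)), then w ∈ Y_k(v). -/

import Mathlib

/-!
The radius `ℓ_k` is 1-Lipschitz for the graph distance (`ellk_le_add_dist`): the ball of radius
`ℓ_k(w)` about `w` has at least `k` vertices and lies in the ball of radius `ℓ_k(w) + dist(w, u)`
about `u`. Hence, if `dist(u, v) ≤ ℓ_k(u)` and `w` is on a shortest path from `u` to `v`, then
`dist(w, v) = dist(u, v) - dist(u, w) ≤ ℓ_k(u) - dist(u, w) ≤ ℓ_k(w)`.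
-/

open Classical

noncomputable section

/-- `Γ_ℓ(v)`: the set of vertices at distance at most `ℓ` from `v`. -/
def Gamma {V : Type*} (G : SimpleGraph V) (v : V) (ℓ : ℕ) : Set V :=
  {u | G.dist u v ≤ ℓ}

/-- `ℓ_k(v)`: the minimum `ℓ` such that `|Γ_ℓ(v)| ≥ k`. -/
def ellk {V : Type*} (G : SimpleGraph V) (k : ℕ) (v : V) : ℕ :=
  sInf {ℓ : ℕ | k ≤ (Gamma G v ℓ).ncard}

/-- `B_k(v) = Γ_{ℓ_k(v)}(v)`. -/
def Bk {V : Type*} (G : SimpleGraph V) (k : ℕ) (v : V) : Set V :=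
  Gamma G v (ellk G k v)

/-- `Y_k(v) = {u : v ∈ B_k(u)}`. -/
def Yk {V : Type*} (G : SimpleGraph V) (k : ℕ) (v : V) : Set V :=
  {u | v ∈ Bk G k u}

/-- In a finite graph some radius yields a ball with at least `k` vertices, so the infimum defining
`ellk` is attained. -/
theorem le_ncard_Gamma_ellk {V : Type*} [Fintype V] (G : SimpleGraph V) {k : ℕ}
    (hkn : k ≤ Fintype.card V) (v : V) : k ≤ (Gamma G v (ellk G k v)).ncard := by
  have hne : {ℓ : ℕ | k ≤ (Gamma G v ℓ).ncard}.Nonempty := by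
    -- The sum of all distances to `v` is a radius whose ball is the whole vertex set.
    refine ⟨∑ x, G.dist x v, ?_⟩
    have huniv : Gamma G v (∑ x, G.dist x v) = Set.univ :=
      Set.eq_univ_of_forall fun x =>
        Finset.single_le_sum (f := fun x => G.dist x v) (fun _ _ => Nat.zero_le _)
          (Finset.mem_univ x)
    simpa [huniv, Set.ncard_univ, Nat.card_eq_fintype_card] using hkn
  exact Nat.sInf_mem hne

theorem ellk_le_add_dist {V : Type*} [Fintype V] (G : SimpleGraph V) (hconn : G.Connected)
    {k : ℕ} (hkn : k ≤ Fintype.card V) (u w : V) :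
    ellk G k u ≤ ellk G k w + G.dist w u := by
  apply Nat.sInf_le
  refine (le_ncard_Gamma_ellk G hkn w).trans (Set.ncard_le_ncard ?_ (Set.toFinite _))
  intro x hx
  exact hconn.dist_triangle.trans (Nat.add_le_add_right hx _)

/-- If `u ∈ Y_k(v)` and `w` lies on a shortest path in `G` between `u` and `v`,
then `w ∈ Y_k(v)`. -/
theorem shortest_path_mem_Yk {V : Type*} [Fintype V]
    (G : SimpleGraph V) (hconn : G.Connected)
    (d : ℕ) (hdeg : ∀ v : V, (G.neighborSet v).ncard ≤ d)
    (k : ℕ) (hk1 : 1 ≤ k) (hkn : k ≤ Fintype.card V)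
    (u v w : V) (hu : u ∈ Yk G k v)
    (hw : G.dist u w + G.dist w v = G.dist u v) :
    w ∈ Yk G k v := by
  have hv : G.dist v u ≤ ellk G k u := hu
  have hlip := ellk_le_add_dist G hconn hkn u w
  change G.dist v w ≤ ellk G k w
  rw [G.dist_comm (u := v)] at hv ⊢
  rw [G.dist_comm (u := w)] at hlip
  omega

end
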